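/- Let γ : ℝ → ℝ² be a closed smooth regular curve with image Γ and unit normal n(t) := (γ₂'(t), −γ₁'(t)), and let Ω ⊂ ℝ² be a bounded open set with topological frontier Γ such that n points out of Ω (i.e., γ(t) + h·n(t) ∉ closure(Ω) for all sufficiently small h > 0). Let g, μ : ℝ → ℝ be continuous and L-periodic. The double-layer kernel k(t,s) := (1/(2π)) ⟨n(s), γ(t) − γ(s)⟩ / ‖γ(t) − γ(s)‖² extends continuously to the diagonal s = t, so that D[μ](γ(t)) := ∫_0^L k(t,s) μ(s) ds is well defined. If μ satisfies the second-kind boundary integral equation −μ(t)/2 + D[μ](γ(t)) = g(t) for all t, then the double-layer potential w(x) := (1/(2π)) ∫_0^L (⟨n(s), x − γ(s)⟩ / ‖x − γ(s)‖²) μ(s) ds is harmonic in Ω and attains the Dirichlet data: for every t, lim_{x→γ(t), x∈Ω} w(x) = g(t). -/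

import Mathlib

/-!
With `T = γ'` and `n = -i T`, the double-layer kernel is `Im (T(σ) / (x - γ(σ)))`, so `w` is the
imaginary part of a Cauchy integral; it is holomorphic off the curve, which gives harmonicity.
The diagonal extension of the kernel follows from writing `γ (s + r) = γ s + r A(s, r)` and
`A(s, r) = γ'(s) + r B(s, r)` with `A`, `B` continuous: the kernel is `-Im (B / A)`.

For the boundary values the key estimate is `ClosedCurve.kernel_compare`: from a point
`γ s + h n(s)`, the kernel `T(s + r) / (x - γ (s + r))` differs from the kernel `1 / (-i h - r)` of
the tangent line by a uniformly bounded amount. As the latter has imaginary part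
`h / (h² + r²)`, whose integral is `2 arctan`, this yields

* `ClosedCurve.dl_bound`: the operator is bounded in the sup norm, uniformly near the curve; hence
  (truncating the density) the potential of a density vanishing at `t` is continuous at `γ t`;
* `ClosedCurve.dl_one_jump`: for the constant density, the limits along the normal differ by `± π`
  from the value on the curve.

The Jordan curve theorem is not needed. The one-sided collars
`{γ s + h n(s) | 0 < ± h < h₀}` are connected and avoid the curve, so the outer one lies outside
`closure Ω` and the inner one in `Ω`. The winding integral `∫ γ' / (x - γ)` has derivative zero off
the curve, hence equals a constant `c` on the outer collar; its restriction to the complement of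
`closure Ω`, extended by `c`, is locally constant on the connected plane and tends to `0` at
infinity, so `c = 0` (`ClosedCurve.outer_collar`). With the jump relation this gives the value `-π`
on the curve and `-2π` inside (`ClosedCurve.gauss`). Splitting `μ = (μ - μ(t)) + μ(t)` concludes.
-/

open MeasureTheory Real Set Filter Topology

noncomputable section

/-- The Euclidean dot product on `ℝ² ≅ ℂ`. -/
def dot2 (z w : ℂ) : ℝ := z.re * w.re + z.im * w.im

/-- The Laplacian `∂²v/∂x₁² + ∂²v/∂x₂²` of `v : ℂ → ℝ`, identifying `ℝ²` with `ℂ`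
(directions `1` and `I`). -/
def lap (v : ℂ → ℝ) (x : ℂ) : ℝ :=
  fderiv ℝ (fun y => fderiv ℝ v y 1) x 1 + fderiv ℝ (fun y => fderiv ℝ v y Complex.I) x Complex.I

/-! ### Closed curves and elementary estimates -/

/-- A closed smooth regular curve of length `L` in `ℝ² ≅ ℂ`: an arc-length parametrized,
`L`-periodic smooth map that is injective over one period. -/
structure ClosedCurve (γ : ℝ → ℂ) (L : ℝ) : Prop where
  pos : 0 < L
  smooth : ContDiff ℝ (⊤ : ℕ∞) γ
  per : Function.Periodic γ L
  inj : Set.InjOn γ (Set.Ico 0 L)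
  unit : ∀ t : ℝ, ‖deriv γ t‖ = 1

namespace ClosedCurve

variable {γ : ℝ → ℂ} {L : ℝ}

lemma smooth_deriv (hc : ClosedCurve γ L) : ContDiff ℝ (⊤ : ℕ∞) (deriv γ) :=
  (contDiff_infty_iff_deriv.1 hc.smooth).2

lemma cont (hc : ClosedCurve γ L) : Continuous γ := hc.smooth.continuous

lemma cont_deriv (hc : ClosedCurve γ L) : Continuous (deriv γ) := hc.smooth_deriv.continuous

lemma hasDeriv (hc : ClosedCurve γ L) (t : ℝ) : HasDerivAt γ (deriv γ t) t :=
  ((contDiff_infty_iff_deriv.1 hc.smooth).1 t).hasDerivAt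

lemma deriv_ne (hc : ClosedCurve γ L) (t : ℝ) : deriv γ t ≠ 0 := by
  intro h
  have := hc.unit t
  simp [h] at this

lemma periodic_deriv {f : ℝ → ℂ} (hf : Function.Periodic f L) : Function.Periodic (deriv f) L := by
  intro t
  rw [← deriv_comp_add_const, funext hf]

lemma per_deriv (hc : ClosedCurve γ L) : Function.Periodic (deriv γ) L := periodic_deriv hc.per

lemma exists_int (hc : ClosedCurve γ L) {a b : ℝ} (h : γ a = γ b) : ∃ m : ℤ, a = b + m * L := by
  have key : ∀ t, γ (toIcoMod hc.pos 0 t) = γ t := fun t => by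
    rw [← self_sub_toIcoDiv_zsmul]
    exact hc.per.sub_zsmul_eq _
  have := hc.inj (toIcoMod_mem_Ico' hc.pos a) (toIcoMod_mem_Ico' hc.pos b) (by rw [key, key, h])
  rw [← self_sub_toIcoDiv_zsmul, ← self_sub_toIcoDiv_zsmul] at this
  refine ⟨toIcoDiv hc.pos 0 a - toIcoDiv hc.pos 0 b, ?_⟩
  simp only [zsmul_eq_mul] at this
  push_cast
  linarith

lemma ne_of_abs_lt (hc : ClosedCurve γ L) {s r : ℝ} (hr : r ≠ 0) (hrL : |r| < L) :
    γ s ≠ γ (s + r) := by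
  intro h
  obtain ⟨m, hm⟩ := hc.exists_int h
  have h1 : r = -(m * L) := by linarith
  have h2 : (|(m : ℝ)|) * L < 1 * L := by
    rw [h1, abs_neg, abs_mul, abs_of_pos hc.pos] at hrL
    linarith
  have h3 : |(m : ℝ)| < 1 := lt_of_mul_lt_mul_right h2 hc.pos.le
  have h4 : |m| < 1 := by exact_mod_cast h3
  rw [Int.abs_lt_one_iff] at h4
  exact hr (by simp [h1, h4])

lemma exists_bound {f : ℝ → ℂ} (hL : 0 < L) (hf : Continuous f) (hp : Function.Periodic f L) :
    ∃ M, 0 < M ∧ ∀ t, ‖f t‖ ≤ M := by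
  obtain ⟨M, hM⟩ := (hp.compact_of_continuous hL.ne' hf).isBounded.exists_norm_le
  exact ⟨max M 1, by positivity, fun t => (hM _ (mem_range_self t)).trans (le_max_left _ _)⟩

lemma deriv_lipschitz (hc : ClosedCurve γ L) : ∃ M, 0 < M ∧ ∀ s t,
    ‖deriv γ t - deriv γ s‖ ≤ M * |t - s| := by
  have h2 := contDiff_infty_iff_deriv.1 hc.smooth_deriv
  obtain ⟨M, hM, h⟩ := exists_bound hc.pos h2.2.continuous (periodic_deriv hc.per_deriv)
  refine ⟨M, hM, fun s t => ?_⟩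
  exact convex_univ.norm_image_sub_le_of_norm_deriv_le (fun x _ => h2.1 x) (fun x _ => h x)
    (mem_univ s) (mem_univ t)

lemma taylor (hc : ClosedCurve γ L) {M : ℝ} (hM : 0 < M)
    (h : ∀ s t, ‖deriv γ t - deriv γ s‖ ≤ M * |t - s|) (s r : ℝ) :
    ‖γ (s + r) - γ s - r * deriv γ s‖ ≤ M * r ^ 2 := by
  have hd : ∀ x ∈ uIcc s (s + r), HasDerivWithinAt (fun x : ℝ => γ x - x * deriv γ s)
      (deriv γ x - 1 * deriv γ s) (uIcc s (s + r)) x := fun x _ =>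
    ((hc.hasDeriv x).sub (((hasDerivAt_id x).ofReal_comp).mul_const _)).hasDerivWithinAt
  have := (convex_uIcc s (s + r)).norm_image_sub_le_of_norm_hasDerivWithin_le
    (C := M * |r|) hd (fun x hx => by
      rw [one_mul]
      refine (h s x).trans ?_
      have := abs_sub_left_of_mem_uIcc hx
      rw [add_sub_cancel_left] at this
      gcongr) left_mem_uIcc right_mem_uIcc
  have e : γ (s + r) - γ s - r * deriv γ s
      = (γ (s + r) - ((s + r : ℝ) : ℂ) * deriv γ s) - (γ s - s * deriv γ s) := by
    push_cast; ring
  rw [e]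
  refine this.trans_eq ?_
  rw [add_sub_cancel_left, Real.norm_eq_abs, mul_assoc, abs_mul_abs_self, sq]

/-- Points of the curve whose parameters are at least `δ` apart modulo `L` stay apart. -/
lemma separation (hc : ClosedCurve γ L) {δ : ℝ} (hδ : 0 < δ) : ∃ m, 0 < m ∧ ∀ s r,
    δ ≤ |r| → |r| ≤ L / 2 → m ≤ ‖γ s - γ (s + r)‖ := by
  have hK : IsCompact (Icc 0 L ×ˢ (Icc (-(L/2)) (L/2) ∩ {r : ℝ | δ ≤ |r|})) :=
    isCompact_Icc.prod (isCompact_Icc.inter_right (isClosed_le continuous_const continuous_abs))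
  have hcont : Continuous fun p : ℝ × ℝ => ‖γ p.1 - γ (p.1 + p.2)‖ := by
    have := hc.cont
    fun_prop
  obtain ⟨m, hm, h⟩ := hK.exists_forall_le' hcont.continuousOn (a := 0) (by
    rintro ⟨s, r⟩ ⟨-, hr, hr'⟩
    have : |r| ≤ L / 2 := abs_le.2 hr
    have hr' : δ ≤ |r| := hr'
    have h0 : r ≠ 0 := by rintro rfl; simp at hr'; linarith
    exact norm_pos_iff.2 (sub_ne_zero.2 (hc.ne_of_abs_lt h0 (by linarith [hc.pos]))))
  refine ⟨m, hm, fun s r h1 h2 => ?_⟩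
  have := h (toIcoMod hc.pos 0 s, r) ⟨Ico_subset_Icc_self (toIcoMod_mem_Ico' hc.pos s),
    abs_le.1 h2, h1⟩
  simp only [← self_sub_toIcoDiv_zsmul] at this
  rwa [hc.per.sub_zsmul_eq, sub_add_eq_add_sub, hc.per.sub_zsmul_eq] at this

/-! ### Normal coordinates and the comparison with the tangent line -/

/-- The point at signed distance `h` from `γ s` in the direction of the normal `-i γ'(s)`. -/
def _root_.normalPt (γ : ℝ → ℂ) (s h : ℝ) : ℂ := γ s + h * (-Complex.I * deriv γ s)

lemma normalPt_zero (s : ℝ) : normalPt γ s 0 = γ s := by simp [normalPt]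

lemma norm_normalPt_sub (hc : ClosedCurve γ L) (s h : ℝ) : ‖normalPt γ s h - γ s‖ = |h| := by
  simp [normalPt, hc.unit]

lemma abs_le_norm_z (h r : ℝ) : |r| ≤ ‖(-Complex.I * h - r : ℂ)‖ := by
  simpa using Complex.abs_re_le_norm (-Complex.I * h - r : ℂ)

/-- In the frame attached to `γ s`, the Cauchy kernel seen from a point of the normal line differs
from the Cauchy kernel of the tangent line by a bounded amount, uniformly up to the curve. At
`h = r = 0` both kernels take the junk value `0`. -/
lemma kernel_compare (hc : ClosedCurve γ L) : ∃ C h₀, 0 < C ∧ 0 < h₀ ∧ ∀ s h r : ℝ,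
    |h| ≤ h₀ → |r| ≤ L / 2 →
    (h ≠ 0 → normalPt γ s h ≠ γ (s + r)) ∧
    ‖deriv γ (s + r) / (normalPt γ s h - γ (s + r)) - 1 / (-Complex.I * h - r : ℂ)‖ ≤ C := by
  obtain ⟨M, hM, hlip⟩ := hc.deriv_lipschitz
  obtain ⟨m, hm, hsep⟩ := hc.separation (δ := 1 / (2 * M)) (by positivity)
  refine ⟨max (4 * M) (2 / m + 2 * M), m / 2, by positivity, by positivity, fun s h r hh hr => ?_⟩
  have hzr := abs_le_norm_z h r
  set z : ℂ := -Complex.I * h - r with hz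
  have hT := hc.deriv_ne s
  rcases le_total (|r|) (1 / (2 * M)) with hs | hs
  · obtain ⟨e, he⟩ : ∃ e, γ (s + r) - γ s - r * deriv γ s = e * deriv γ s :=
      ⟨_, (div_mul_cancel₀ _ hT).symm⟩
    obtain ⟨d, hd⟩ : ∃ d, deriv γ (s + r) - deriv γ s = d * deriv γ s :=
      ⟨_, (div_mul_cancel₀ _ hT).symm⟩
    have he' : ‖e‖ ≤ M * r ^ 2 := by
      have := hc.taylor hM hlip s r
      rwa [he, norm_mul, hc.unit, mul_one] at this
    have hd' : ‖d‖ ≤ M * |r| := by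
      have := hlip s (s + r)
      rwa [hd, norm_mul, hc.unit, mul_one, add_sub_cancel_left] at this
    have he2 : ‖e‖ ≤ |r| / 2 := by
      refine he'.trans ?_
      rw [← sq_abs]
      rw [le_div_iff₀ (by positivity)] at hs
      nlinarith [abs_nonneg r]
    have hx : normalPt γ s h - γ (s + r) = deriv γ s * (z - e) := by
      rw [normalPt, hz]; linear_combination -he
    have hx' : deriv γ (s + r) = deriv γ s * (1 + d) := by linear_combination hd
    have hze : ‖z‖ / 2 ≤ ‖z - e‖ := by
      have := norm_sub_norm_le z e
      linarith
    rcases eq_or_ne z 0 with h0 | h0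
    · have hr0 : r = 0 := by
        rw [h0, norm_zero] at hzr
        exact abs_nonpos_iff.1 hzr
      have he0 : e = 0 := by
        rw [hr0] at he'
        simpa using he'
      have hh0 : h = 0 := by
        rw [hz, hr0] at h0
        simpa using h0
      refine ⟨fun h' => (h' hh0).elim, ?_⟩
      rw [hx, h0, he0]
      simp
      left; positivity
    · have hzp : 0 < ‖z‖ := norm_pos_iff.2 h0
      have hze0 : z - e ≠ 0 := norm_pos_iff.1 (by linarith)
      refine ⟨fun _ => sub_ne_zero.1 (by rw [hx]; exact mul_ne_zero hT hze0), ?_⟩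
      refine le_trans ?_ (le_max_left _ _)
      rw [hx, hx', mul_div_mul_left _ _ hT, div_sub_div _ _ hze0 h0, norm_div, norm_mul,
        div_le_iff₀ (by positivity)]
      have e1 : (1 + d) * z - (z - e) * 1 = d * z + e := by ring
      rw [e1]
      have b1 : ‖d * z + e‖ ≤ M * ‖z‖ * ‖z‖ + M * (‖z‖ * ‖z‖) := by
        refine (norm_add_le _ _).trans (add_le_add ?_ ?_)
        · rw [norm_mul]
          gcongr
          exact hd'.trans (by gcongr)
        · refine he'.trans ?_
          rw [← sq_abs, sq]
          gcongr
      nlinarith [mul_pos hM hzp]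
  · have h1 := hsep s r hs hr
    have h2 : m / 2 ≤ ‖normalPt γ s h - γ (s + r)‖ := by
      have := hc.norm_normalPt_sub s h
      have h3 := norm_sub_le (normalPt γ s h - γ (s + r)) (normalPt γ s h - γ s)
      have e : normalPt γ s h - γ (s + r) - (normalPt γ s h - γ s) = γ s - γ (s + r) := by ring
      rw [e] at h3
      linarith
    refine ⟨fun _ => sub_ne_zero.1 (norm_pos_iff.1 (by linarith)), ?_⟩
    refine le_trans ?_ (le_max_right _ _)
    refine (norm_sub_le _ _).trans (add_le_add ?_ ?_)
    · rw [norm_div, hc.unit]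
      exact (one_div_le_one_div_of_le (by positivity) h2).trans_eq (by field_simp)
    · rw [norm_div, norm_one]
      exact (one_div_le_one_div_of_le (by positivity) (hs.trans hzr)).trans_eq (by field_simp)

/-- Every point of the plane lies on the normal line through a closest point of the curve. -/
lemma exists_foot (hc : ClosedCurve γ L) (x : ℂ) :
    ∃ s h : ℝ, x = normalPt γ s h ∧ ∀ t, |h| ≤ ‖x - γ t‖ := by
  have hcpt := hc.per.compact_of_continuous hc.pos.ne' hc.cont
  obtain ⟨_, ⟨s, rfl⟩, hs⟩ := hcpt.exists_isMinOn (range_nonempty γ)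
    (f := fun y => ‖x - y‖) (by fun_prop)
  have hmin : ∀ t, ‖x - γ s‖ ≤ ‖x - γ t‖ := fun t => hs (mem_range_self t)
  have hder : HasDerivAt (fun t => ‖x - γ t‖ ^ 2)
      (2 * inner ℝ (x - γ s) (-deriv γ s)) s := by
    simpa using ((hasDerivAt_const s x).sub (hc.hasDeriv s)).norm_sq
  have hloc : IsLocalMin (fun t => ‖x - γ t‖ ^ 2) s :=
    Eventually.of_forall fun t => by
      have := hmin t
      dsimp only
      gcongr
  have h0 := hloc.hasDerivAt_eq_zero hder
  have hre : ((x - γ s) * starRingEnd ℂ (deriv γ s)).re = 0 := by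
    simp [Complex.inner] at h0
    simp
    linarith
  have hx : x = normalPt γ s (-((x - γ s) * starRingEnd ℂ (deriv γ s)).im) := by
    have h1 : starRingEnd ℂ (deriv γ s) * deriv γ s = 1 := by
      rw [mul_comm, Complex.mul_conj, Complex.normSq_eq_norm_sq, hc.unit]; simp
    have h2 : (x - γ s) * starRingEnd ℂ (deriv γ s)
        = ((x - γ s) * starRingEnd ℂ (deriv γ s)).im * Complex.I := by
      apply Complex.ext
      · rw [hre]; simp
      · simp
    have h3 : x - γ s = ((x - γ s) * starRingEnd ℂ (deriv γ s)) * deriv γ s := by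
      rw [mul_assoc, h1, mul_one]
    rw [h2] at h3
    rw [normalPt]
    push_cast
    linear_combination h3
  refine ⟨s, _, hx, fun t => ?_⟩
  rw [← hc.norm_normalPt_sub, ← hx]
  exact hmin t

/-! ### Cauchy integrals and the winding integral -/

/-- The Cauchy integral of the density `ρ dσ` on the curve. -/
def _root_.cauchyInt (γ : ℝ → ℂ) (L : ℝ) (ρ : ℝ → ℂ) (x : ℂ) : ℂ :=
  ∫ σ in (0:ℝ)..L, ρ σ / (x - γ σ)

lemma compact_range (hc : ClosedCurve γ L) : IsCompact (range γ) :=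
  hc.per.compact_of_continuous hc.pos.ne' hc.cont

lemma isOpen_compl (hc : ClosedCurve γ L) : IsOpen (range γ)ᶜ :=
  hc.compact_range.isClosed.isOpen_compl

lemma cauchyInt_hasDerivAt (hc : ClosedCurve γ L) {ρ : ℝ → ℂ} (hρ : Continuous ρ) {x : ℂ}
    (hx : x ∉ range γ) :
    HasDerivAt (cauchyInt γ L ρ) (∫ σ in (0:ℝ)..L, -ρ σ / (x - γ σ) ^ 2) x := by
  obtain ⟨d, hd, hball⟩ := Metric.isOpen_iff.1 hc.isOpen_compl x hx
  have hne : ∀ y ∈ Metric.ball x d, ∀ σ, y - γ σ ≠ 0 := fun y hy σ h =>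
    hball hy ⟨σ, (sub_eq_zero.1 h).symm⟩
  have hxd : ∀ σ, d ≤ ‖x - γ σ‖ := fun σ => by
    by_contra h
    have hmem : γ σ ∈ Metric.ball x d := by
      rw [Metric.mem_ball, dist_comm, dist_eq_norm]; linarith
    exact hball hmem ⟨σ, rfl⟩
  have hcγ := hc.cont
  have hxx : x ∈ Metric.ball x d := Metric.mem_ball_self hd
  refine (intervalIntegral.hasDerivAt_integral_of_dominated_loc_of_deriv_le
    (F := fun x σ => ρ σ / (x - γ σ)) (F' := fun x σ => -ρ σ / (x - γ σ) ^ 2)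
    (s := Metric.ball x (d / 2)) (bound := fun σ => ‖ρ σ‖ / (d / 2) ^ 2)
    (Metric.ball_mem_nhds x (by positivity)) ?_ ?_ ?_ ?_ ?_ ?_).2
  · filter_upwards [Metric.ball_mem_nhds x hd] with y hy
    exact (hρ.div (by fun_prop) (hne y hy)).aestronglyMeasurable
  · exact (hρ.div (by fun_prop) (hne x hxx)).intervalIntegrable _ _
  · exact (hρ.neg.div (by fun_prop) fun σ => pow_ne_zero 2 (hne x hxx σ)).aestronglyMeasurable
  · refine Eventually.of_forall fun σ _ y hy => ?_
    rw [norm_div, norm_neg, norm_pow]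
    have h1 := hxd σ
    rw [Metric.mem_ball, dist_comm, dist_eq_norm] at hy
    have h2 := norm_sub_le_norm_sub_add_norm_sub x y (γ σ)
    have : d / 2 ≤ ‖y - γ σ‖ := by linarith
    gcongr
  · exact (hρ.norm.div_const _).intervalIntegrable _ _
  · refine Eventually.of_forall fun σ _ y hy => ?_
    have h0 := hne y (Metric.ball_subset_ball (by linarith) hy) σ
    have := ((hasDerivAt_id y).sub_const (γ σ)).inv h0
    refine (this.const_mul (ρ σ)).congr_deriv ?_
    simp only [id]
    ring

lemma cauchyInt_differentiableOn (hc : ClosedCurve γ L) {ρ : ℝ → ℂ} (hρ : Continuous ρ) :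
    DifferentiableOn ℂ (cauchyInt γ L ρ) (range γ)ᶜ := fun _ hx =>
  (hc.cauchyInt_hasDerivAt hρ hx).differentiableAt.differentiableWithinAt

/-- The winding integral has zero derivative off the curve, since `γ' / (x - γ)²` is the derivative
of a periodic function. -/
lemma winding_hasDerivAt (hc : ClosedCurve γ L) {x : ℂ} (hx : x ∉ range γ) :
    HasDerivAt (cauchyInt γ L (deriv γ)) 0 x := by
  convert hc.cauchyInt_hasDerivAt hc.cont_deriv hx using 1
  have hne : ∀ σ, x - γ σ ≠ 0 := fun σ h => hx ⟨σ, (sub_eq_zero.1 h).symm⟩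
  have hcγ := hc.cont
  have hd : ∀ σ ∈ uIcc 0 L, HasDerivAt (fun σ => -(x - γ σ)⁻¹)
      (-deriv γ σ / (x - γ σ) ^ 2) σ := fun σ _ => by
    refine (((hasDerivAt_const σ x).sub (hc.hasDeriv σ)).inv (hne σ)).neg.congr_deriv ?_
    simp only [Pi.sub_apply]
    ring
  rw [intervalIntegral.integral_eq_sub_of_hasDerivAt hd
    ((hc.cont_deriv.neg.div (by fun_prop) fun σ => pow_ne_zero 2 (hne σ)).intervalIntegrable _ _)]
  have := hc.per 0
  rw [zero_add] at this
  rw [this, sub_self]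

lemma winding_const (hc : ClosedCurve γ L) {S : Set ℂ} (hS : IsPreconnected S)
    (hdis : S ⊆ (range γ)ᶜ) {x y : ℂ} (hx : x ∈ S) (hy : y ∈ S) :
    cauchyInt γ L (deriv γ) x = cauchyInt γ L (deriv γ) y := by
  have hsub := hS.subset_connectedComponentIn hx hdis
  have hin := connectedComponentIn_subset (range γ)ᶜ x
  exact (hc.isOpen_compl.connectedComponentIn (x := x)).is_const_of_deriv_eq_zero
    isPreconnected_connectedComponentIn
    ((hc.cauchyInt_differentiableOn hc.cont_deriv).mono hin)
    (fun z hz => (hc.winding_hasDerivAt (hin hz)).deriv) (hsub hx) (hsub hy)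

/-- The winding integral tends to zero at infinity. -/
lemma winding_far (hc : ClosedCurve γ L) {ε : ℝ} (hε : 0 < ε) :
    ∃ R, ∀ x : ℂ, R ≤ ‖x‖ → ‖cauchyInt γ L (deriv γ) x‖ ≤ ε := by
  obtain ⟨B, hB, hb⟩ := exists_bound hc.pos hc.cont hc.per
  have hL := hc.pos
  refine ⟨B + L / ε, fun x hx => ?_⟩
  have := intervalIntegral.norm_integral_le_of_norm_le_const (a := 0) (b := L)
    (f := fun σ => deriv γ σ / (x - γ σ)) (C := ε / L) (fun σ _ => by
      rw [norm_div, hc.unit]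
      have h1 := norm_sub_norm_le x (γ σ)
      have h2 : L / ε ≤ ‖x - γ σ‖ := by linarith [hb σ]
      exact (one_div_le_one_div_of_le (by positivity) h2).trans_eq (by field_simp))
  refine this.trans_eq ?_
  rw [sub_zero, abs_of_pos hL]
  field_simp

end ClosedCurve

/-! ### The kernel as an imaginary part, and harmonicity -/

lemma dot2_normal (T z : ℂ) : dot2 (-Complex.I * T) z / ‖z‖ ^ 2 = (T / z).im := by
  rw [Complex.div_im, ← Complex.normSq_eq_norm_sq, dot2]
  simp
  ring

/-- The imaginary part of a holomorphic function is harmonic. -/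
lemma harmonic_im {F : ℂ → ℂ} {U : Set ℂ} (hU : IsOpen U) (hF : DifferentiableOn ℂ F U)
    {w : ℂ → ℝ} {c : ℝ} (hw : ∀ x ∈ U, w x = c * (F x).im) :
    ContDiffOn ℝ 2 w U ∧ ∀ x ∈ U, lap w x = 0 := by
  have hF2 : DifferentiableOn ℂ (deriv F) U := hF.deriv hU
  have key : ∀ (G : ℂ → ℂ) (G' x v : ℂ), HasDerivAt G G' x →
      fderiv ℝ (fun y => c * (G y).im) x v = c * (G' * v).im := by
    intro G G' x v hG
    have h1 := hG.hasFDerivAt.restrictScalars ℝ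
    have h2 := ((Complex.imCLM.hasFDerivAt (x := G x)).comp x h1).const_mul c
    have h3 : HasFDerivAt (fun y => c * (G y).im) _ x := h2
    rw [h3.fderiv]
    simp [mul_comm]
  constructor
  · have h1 : ContDiffOn ℝ 2 F U := (hF.contDiffOn hU).restrict_scalars ℝ
    exact (contDiffOn_const.mul (Complex.imCLM.contDiff.comp_contDiffOn h1)).congr hw
  · intro x hx
    have hd : ∀ y ∈ U, ∀ v, fderiv ℝ w y v = c * (deriv F y * v).im := fun y hy v => by
      have he : w =ᶠ[𝓝 y] fun y => c * (F y).im := by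
        filter_upwards [hU.mem_nhds hy] with z hz using hw z hz
      rw [he.fderiv_eq]
      exact key F _ y v (hF.differentiableAt (hU.mem_nhds hy)).hasDerivAt
    have hd2 : ∀ v, fderiv ℝ (fun y => fderiv ℝ w y v) x v
        = c * (deriv (deriv F) x * v * v).im := fun v => by
      have : (fun y => fderiv ℝ w y v) =ᶠ[𝓝 x] fun y => c * (deriv F y * v).im := by
        filter_upwards [hU.mem_nhds hx] with y hy using hd y hy v
      rw [this.fderiv_eq]
      exact key (fun y => deriv F y * v) _ x v
        ((hF2.differentiableAt (hU.mem_nhds hx)).hasDerivAt.mul_const v)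
    rw [lap, hd2, hd2, mul_assoc _ Complex.I, Complex.I_mul_I]
    simp

/-! ### Continuity of the kernel up to the diagonal -/

/-- The divided difference `(f (s + r) - f s) / r`, extended continuously to `r = 0`. -/
def hadamard (f : ℝ → ℂ) (s r : ℝ) : ℂ := ∫ θ in (0:ℝ)..1, deriv f (s + θ * r)

lemma hadamard_eq {f : ℝ → ℂ} (hf : ContDiff ℝ 1 f) (s r : ℝ) :
    f (s + r) - f s = r * hadamard f s r := by
  have hd : ∀ θ ∈ uIcc (0:ℝ) 1, HasDerivAt (fun θ : ℝ => f (s + θ * r))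
      (r • deriv f (s + θ * r)) θ := fun θ _ => by
    have h1 : HasDerivAt (fun θ : ℝ => s + θ * r) r θ := by
      simpa using ((hasDerivAt_id θ).mul_const r).const_add s
    exact ((hf.differentiable one_ne_zero _).hasDerivAt).scomp θ h1
  have hcd := hf.continuous_deriv le_rfl
  have := intervalIntegral.integral_eq_sub_of_hasDerivAt hd
    (Continuous.intervalIntegrable (by fun_prop) _ _)
  simp only [one_mul, zero_mul, add_zero] at this
  rw [← this, intervalIntegral.integral_smul, hadamard]
  simp

lemma hadamard_zero (f : ℝ → ℂ) (s : ℝ) : hadamard f s 0 = deriv f s := by simp [hadamard]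

lemma hadamard_cont {f : ℝ → ℂ} (hf : ContDiff ℝ 1 f) :
    Continuous fun p : ℝ × ℝ => hadamard f p.1 p.2 := by
  have hcd := hf.continuous_deriv le_rfl
  apply intervalIntegral.continuous_parametric_intervalIntegral_of_continuous'
    (f := fun (p : ℝ × ℝ) (θ : ℝ) => deriv f (p.1 + θ * p.2))
  unfold Function.uncurry
  fun_prop

namespace ClosedCurve

variable {γ : ℝ → ℂ} {L : ℝ}

/-- The double-layer kernel (without the factor `1 / (2π)`), with the value forced by continuity
where `γ t = γ s`: half the curvature, up to sign. -/
def _root_.dlKernel (γ : ℝ → ℂ) (t s : ℝ) : ℝ :=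
  if γ t = γ s then -((∫ θ in (0:ℝ)..1, θ * deriv (deriv γ) s) / deriv γ s).im
  else (deriv γ s / (γ t - γ s)).im

lemma dlKernel_cont (hc : ClosedCurve γ L) :
    Continuous fun p : ℝ × ℝ => dlKernel γ p.1 p.2 := by
  have hcγ := hc.cont
  have hcd := hc.cont_deriv
  have hγ1 : ContDiff ℝ 1 γ := hc.smooth.of_le (by exact_mod_cast le_top)
  have hγ2 : ContDiff ℝ 1 (deriv γ) := hc.smooth_deriv.of_le (by exact_mod_cast le_top)
  -- `γ (s + r) = γ s + r A` and `A = γ' s + r B`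
  set A : ℝ → ℝ → ℂ := hadamard γ with hA
  set B : ℝ → ℝ → ℂ := fun s r => ∫ θ in (0:ℝ)..1, θ * hadamard (deriv γ) s (θ * r) with hB
  have hAc : Continuous fun p : ℝ × ℝ => A p.1 p.2 := hadamard_cont hγ1
  have hBc : Continuous fun p : ℝ × ℝ => B p.1 p.2 := by
    have h1 := hadamard_cont hγ2
    apply intervalIntegral.continuous_parametric_intervalIntegral_of_continuous'
      (f := fun (p : ℝ × ℝ) (θ : ℝ) => (θ : ℂ) * hadamard (deriv γ) p.1 (θ * p.2))
    unfold Function.uncurry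
    have h2 : Continuous fun q : (ℝ × ℝ) × ℝ => hadamard (deriv γ) q.1.1 (q.2 * q.1.2) :=
      h1.comp (f := fun q : (ℝ × ℝ) × ℝ => (q.1.1, q.2 * q.1.2)) (by fun_prop)
    exact (Complex.continuous_ofReal.comp continuous_snd).mul h2
  have hAB : ∀ s r : ℝ, A s r = deriv γ s + r * B s r := fun s r => by
    have h1 : ∀ θ : ℝ, deriv γ (s + θ * r)
        = deriv γ s + r * (θ * hadamard (deriv γ) s (θ * r)) := fun θ => by
      have := hadamard_eq hγ2 s (θ * r)
      push_cast at this
      linear_combination this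
    have h2 : Continuous fun θ : ℝ => (θ : ℂ) * hadamard (deriv γ) s (θ * r) := by
      have h3 : Continuous fun θ : ℝ => hadamard (deriv γ) s (θ * r) :=
        (hadamard_cont hγ2).comp (f := fun θ : ℝ => (s, θ * r)) (by fun_prop)
      exact Complex.continuous_ofReal.mul h3
    have h3 : A s r = ∫ θ in (0:ℝ)..1,
        (deriv γ s + r * (θ * hadamard (deriv γ) s (θ * r))) := by
      simp only [hA]
      rw [hadamard]
      simp_rw [h1]
    have h4 : IntervalIntegrable (fun θ : ℝ => (r : ℂ) * (θ * hadamard (deriv γ) s (θ * r)))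
        volume 0 1 := (continuous_const.mul h2).intervalIntegrable _ _
    rw [h3, intervalIntegral.integral_add (by simp) h4, intervalIntegral.integral_const_mul]
    simp [hB]
  have hdiag : ∀ s₀ : ℝ, ContinuousAt (fun p : ℝ × ℝ => dlKernel γ p.1 p.2) (s₀, s₀) := by
    intro s₀
    have hG : ContinuousAt (fun p : ℝ × ℝ => -(B p.2 (p.1 - p.2) / A p.2 (p.1 - p.2)).im)
        (s₀, s₀) := by
      have c1 : Continuous fun p : ℝ × ℝ => B p.2 (p.1 - p.2) :=
        hBc.comp (f := fun p : ℝ × ℝ => (p.2, p.1 - p.2)) (by fun_prop)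
      have c2 : Continuous fun p : ℝ × ℝ => A p.2 (p.1 - p.2) :=
        hAc.comp (f := fun p : ℝ × ℝ => (p.2, p.1 - p.2)) (by fun_prop)
      have h0 : A s₀ (s₀ - s₀) ≠ 0 := by
        rw [sub_self, hA, hadamard_zero]; exact hc.deriv_ne s₀
      exact (Complex.continuous_im.continuousAt.comp
        (c1.continuousAt.div c2.continuousAt h0)).neg
    refine hG.congr ?_
    have hnear : ∀ᶠ p : ℝ × ℝ in 𝓝 (s₀, s₀), |p.1 - p.2| < L := by
      have : Continuous fun p : ℝ × ℝ => |p.1 - p.2| := by fun_prop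
      refine this.continuousAt.eventually (Iio_mem_nhds ?_)
      simpa using hc.pos
    filter_upwards [hnear] with p hp
    obtain ⟨t, s⟩ := p
    dsimp only at hp ⊢
    rcases eq_or_ne t s with rfl | hts
    · simp [dlKernel, hA, hB, hadamard_zero]
    · have hr : t - s ≠ 0 := sub_ne_zero.2 hts
      have hne : γ s ≠ γ t := by
        simpa using hc.ne_of_abs_lt (s := s) hr hp
      have h1 := hadamard_eq hγ1 s (t - s)
      rw [add_sub_cancel, ← hA] at h1
      have hA0 : A s (t - s) ≠ 0 := by
        intro h
        rw [h, mul_zero] at h1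
        exact hne (sub_eq_zero.1 h1).symm
      have hr' : ((t - s : ℝ) : ℂ) ≠ 0 := by exact_mod_cast hr
      have h2 : deriv γ s / (γ t - γ s)
          = ((1 / (t - s) : ℝ) : ℂ) - B s (t - s) / A s (t - s) := by
        have h3 : deriv γ s = A s (t - s) - (t - s : ℝ) * B s (t - s) := by
          rw [hAB]; ring
        rw [h1, h3]
        push_cast at hr' ⊢
        field_simp
      rw [dlKernel, if_neg hne.symm, h2, Complex.sub_im, Complex.ofReal_im, zero_sub]
  rw [continuous_iff_continuousAt]
  rintro ⟨t, s⟩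
  by_cases hts : γ t = γ s
  · obtain ⟨m, hm⟩ := hc.exists_int hts
    have hper : (fun p : ℝ × ℝ => dlKernel γ p.1 p.2)
        = (fun p : ℝ × ℝ => dlKernel γ p.1 p.2) ∘ fun p : ℝ × ℝ => (p.1 - m * L, p.2) := by
      funext p
      simp only [Function.comp, dlKernel, hc.per.sub_int_mul_eq]
    rw [hper]
    refine ContinuousAt.comp ?_ (by fun_prop)
    have : ((t, s).1 - m * L, (t, s).2) = (s, s) := by simp [hm]
    rw [this]
    exact hdiag s
  · have hcl : ∀ᶠ p : ℝ × ℝ in 𝓝 (t, s), γ p.1 - γ p.2 ≠ 0 := by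
      have : Continuous fun p : ℝ × ℝ => γ p.1 - γ p.2 := by fun_prop
      exact this.continuousAt.eventually_ne (sub_ne_zero.2 hts)
    have hG : ContinuousAt (fun p : ℝ × ℝ => (deriv γ p.2 / (γ p.1 - γ p.2)).im) (t, s) :=
      Complex.continuous_im.continuousAt.comp (ContinuousAt.div
        (by fun_prop) (by fun_prop) (sub_ne_zero.2 hts))
    refine hG.congr ?_
    filter_upwards [hcl] with p hp
    rw [dlKernel, if_neg (sub_ne_zero.1 hp)]

/-! ### The double-layer operator and its uniform bound -/

/-- `2π` times the double-layer potential of the density `ν`, written with the complex kernel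
`Im (γ'(σ) / (x - γ(σ)))`. -/
def _root_.dl (γ : ℝ → ℂ) (L : ℝ) (ν : ℝ → ℝ) (x : ℂ) : ℝ :=
  ∫ σ in (0:ℝ)..L, (deriv γ σ / (x - γ σ)).im * ν σ

lemma measurable_kernel (hc : ClosedCurve γ L) (x : ℂ) :
    Measurable fun σ => (deriv γ σ / (x - γ σ)).im := by
  have h1 := hc.cont.measurable
  have h2 := hc.cont_deriv.measurable
  exact Complex.measurable_im.comp (h2.div (measurable_const.sub h1))

lemma continuous_kernel (hc : ClosedCurve γ L) {x : ℂ} (hx : x ∉ range γ) :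
    Continuous fun σ => (deriv γ σ / (x - γ σ)).im := by
  have hcγ := hc.cont
  exact Complex.continuous_im.comp (hc.cont_deriv.div (by fun_prop)
    fun σ h => hx ⟨σ, (sub_eq_zero.1 h).symm⟩)

lemma im_cauchyInt (hc : ClosedCurve γ L) {ν : ℝ → ℝ} (hν : Continuous ν) {x : ℂ}
    (hx : x ∉ range γ) : (cauchyInt γ L (fun σ => deriv γ σ * ν σ) x).im = dl γ L ν x := by
  have hcγ := hc.cont
  have hcd := hc.cont_deriv
  have hi : IntervalIntegrable (fun σ => deriv γ σ * ν σ / (x - γ σ)) volume 0 L :=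
    Continuous.intervalIntegrable (Continuous.div (by fun_prop) (by fun_prop)
      fun σ h => hx ⟨σ, (sub_eq_zero.1 h).symm⟩) _ _
  have := Complex.imCLM.intervalIntegral_comp_comm hi
  simp only [Complex.imCLM_apply] at this
  rw [cauchyInt, ← this, dl]
  congr 1
  funext σ
  rw [mul_div_right_comm, Complex.im_mul_ofReal]

lemma dl_one (hc : ClosedCurve γ L) {x : ℂ} (hx : x ∉ range γ) :
    dl γ L (fun _ => 1) x = (cauchyInt γ L (deriv γ) x).im := by
  rw [← hc.im_cauchyInt continuous_const hx]
  simp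

/-- The integral over a period, centred at `s`. -/
lemma dl_window (hc : ClosedCurve γ L) {ν : ℝ → ℝ} (hp : Function.Periodic ν L) (x : ℂ) (s : ℝ) :
    dl γ L ν x
      = ∫ r in (-(L/2))..(L/2), (deriv γ (s + r) / (x - γ (s + r))).im * ν (s + r) := by
  have hper : Function.Periodic (fun σ => (deriv γ σ / (x - γ σ)).im * ν σ) L := fun σ => by
    simp only [hc.per σ, hc.per_deriv σ, hp σ]
  have h1 := hper.intervalIntegral_add_eq 0 (s - L / 2)
  rw [zero_add] at h1
  rw [dl, h1, intervalIntegral.integral_comp_add_left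
    (fun σ => (deriv γ σ / (x - γ σ)).im * ν σ)]
  congr 1
  all_goals ring

lemma im_tangent (h r : ℝ) : (1 / (-Complex.I * h - r : ℂ)).im = h / (h ^ 2 + r ^ 2) := by
  simp [Complex.normSq_apply]
  ring

lemma continuous_poisson {h : ℝ} (hh : h ≠ 0) : Continuous fun r : ℝ => h / (h ^ 2 + r ^ 2) :=
  continuous_const.div (by fun_prop) fun r => by positivity

lemma poisson_integral {h : ℝ} (hh : h ≠ 0) (a : ℝ) :
    ∫ r in (-a)..a, h / (h ^ 2 + r ^ 2) = 2 * arctan (a / h) := by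
  have hd : ∀ r ∈ uIcc (-a) a, HasDerivAt (fun r => arctan (r / h)) (h / (h ^ 2 + r ^ 2)) r := by
    intro r _
    refine ((hasDerivAt_id r).div_const h).arctan.congr_deriv ?_
    have : h ^ 2 + r ^ 2 ≠ 0 := by positivity
    simp only [id]
    field_simp
  rw [intervalIntegral.integral_eq_sub_of_hasDerivAt hd
    ((continuous_poisson hh).intervalIntegrable _ _), neg_div, arctan_neg]
  ring

/-- The double-layer operator is bounded in the sup norm, uniformly up to the curve: the comparison
with the tangent line reduces this to the integrability of the Poisson kernel. -/
lemma dl_bound (hc : ClosedCurve γ L) {C h₀ : ℝ}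
    (hC : ∀ s h r : ℝ, |h| ≤ h₀ → |r| ≤ L / 2 →
      ‖deriv γ (s + r) / (normalPt γ s h - γ (s + r)) - 1 / (-Complex.I * h - r : ℂ)‖ ≤ C)
    {ν : ℝ → ℝ} (hp : Function.Periodic ν L) {ε : ℝ} (hε : ∀ σ, |ν σ| ≤ ε) {s h : ℝ}
    (hh : |h| ≤ h₀) : |dl γ L ν (normalPt γ s h)| ≤ (C * L + π) * ε := by
  have hL := hc.pos
  have hε0 : 0 ≤ ε := (abs_nonneg _).trans (hε 0)
  have hPint : IntervalIntegrable (fun r : ℝ => |h| / (|h| ^ 2 + r ^ 2)) volume (-(L/2)) (L/2) ∧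
      ∫ r in (-(L/2))..(L/2), |h| / (|h| ^ 2 + r ^ 2) ≤ π := by
    rcases eq_or_ne h 0 with rfl | hh0
    · simp [pi_pos.le]
    · have h1 : |h| ≠ 0 := abs_ne_zero.2 hh0
      refine ⟨(continuous_poisson h1).intervalIntegrable _ _, ?_⟩
      rw [poisson_integral h1]
      linarith [arctan_lt_pi_div_two (L / 2 / |h|)]
  rw [hc.dl_window hp _ s, ← Real.norm_eq_abs]
  refine (intervalIntegral.norm_integral_le_of_norm_le (by linarith)
    (g := fun r => (C + |h| / (|h| ^ 2 + r ^ 2)) * ε) (Eventually.of_forall fun r hr => ?_)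
    ((intervalIntegrable_const.add hPint.1).mul_const _)).trans ?_
  · have h1 := (Complex.abs_im_le_norm _).trans
      (hC s h r hh (abs_le.2 ⟨hr.1.le, hr.2⟩))
    rw [Complex.sub_im, im_tangent] at h1
    have h2 : |h / (h ^ 2 + r ^ 2)| = |h| / (|h| ^ 2 + r ^ 2) := by
      rw [abs_div, sq_abs, abs_of_nonneg (by positivity : 0 ≤ h ^ 2 + r ^ 2)]
    rw [norm_mul, Real.norm_eq_abs, Real.norm_eq_abs]
    refine mul_le_mul ?_ (hε _) (abs_nonneg _) ?_
    · rw [← h2]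
      have := abs_sub_abs_le_abs_sub (deriv γ (s + r) / (normalPt γ s h - γ (s + r))).im
        (h / (h ^ 2 + r ^ 2))
      linarith
    · rw [← h2]
      linarith [abs_nonneg (h / (h ^ 2 + r ^ 2)), abs_nonneg
        ((deriv γ (s + r) / (normalPt γ s h - γ (s + r))).im - h / (h ^ 2 + r ^ 2))]
  · rw [intervalIntegral.integral_mul_const]
    refine mul_le_mul_of_nonneg_right ?_ hε0
    rw [intervalIntegral.integral_add intervalIntegrable_const hPint.1,
      intervalIntegral.integral_const]
    have : (L / 2 - -(L / 2)) • C = C * L := by rw [smul_eq_mul]; ring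
    linarith [hPint.2]

/-! ### The jump relation for the constant density -/

/-- Once the Poisson kernel of the tangent line, which carries the jump, is subtracted, the
integral of the double-layer kernel is continuous along the normal line. -/
lemma dl_one_split (hc : ClosedCurve γ L) {C h₀ : ℝ} (hh₀ : 0 < h₀)
    (hC : ∀ s h r : ℝ, |h| ≤ h₀ → |r| ≤ L / 2 → (h ≠ 0 → normalPt γ s h ≠ γ (s + r)) ∧
      ‖deriv γ (s + r) / (normalPt γ s h - γ (s + r)) - 1 / (-Complex.I * h - r : ℂ)‖ ≤ C)
    (t : ℝ) : Tendsto (fun h => dl γ L (fun _ => 1) (normalPt γ t h) - 2 * arctan (L / 2 / h))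
      (𝓝[≠] 0) (𝓝 (dl γ L (fun _ => 1) (γ t))) := by
  have hL := hc.pos
  have hcγ := hc.cont
  have hcd := hc.cont_deriv
  set D : ℝ → ℝ → ℝ := fun h r =>
    (deriv γ (t + r) / (normalPt γ t h - γ (t + r))).im - h / (h ^ 2 + r ^ 2) with hD
  have hDm : ∀ h, Measurable (D h) := fun h =>
    ((hc.measurable_kernel _).comp (measurable_const_add t)).sub (by fun_prop)
  have hDb : ∀ h r, |h| ≤ h₀ → |r| ≤ L / 2 → |D h r| ≤ C := fun h r hh hr => by
    have := (Complex.abs_im_le_norm _).trans (hC t h r hh hr).2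
    rwa [Complex.sub_im, im_tangent] at this
  have hI : ∀ r, r ∈ uIoc (-(L/2)) (L/2) → |r| ≤ L / 2 := fun r hr => by
    rw [uIoc_of_le (by linarith)] at hr
    exact abs_le.2 ⟨hr.1.le, hr.2⟩
  have hsmall : ∀ᶠ h : ℝ in 𝓝[≠] 0, |h| ≤ h₀ := by
    have : ∀ᶠ h : ℝ in 𝓝 0, |h| < h₀ :=
      continuous_abs.continuousAt.eventually (Iio_mem_nhds (by simpa using hh₀))
    exact (this.filter_mono nhdsWithin_le_nhds).mono fun _ h => h.le
  have hne0 : ∀ᵐ r : ℝ, r ≠ 0 := by simp [ae_iff, measure_singleton]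
  have hlim : Tendsto (fun h => ∫ r in (-(L/2))..(L/2), D h r) (𝓝[≠] 0)
      (𝓝 (∫ r in (-(L/2))..(L/2), D 0 r)) := by
    refine intervalIntegral.tendsto_integral_filter_of_dominated_convergence (fun _ => C)
      (Eventually.of_forall fun h => (hDm h).aestronglyMeasurable) ?_
      intervalIntegrable_const ?_
    · filter_upwards [hsmall] with h hh
      exact Eventually.of_forall fun r hr => hDb h r hh (hI r hr)
    · filter_upwards [hne0] with r hr0 hr
      have hne : normalPt γ t 0 - γ (t + r) ≠ 0 := by
        rw [normalPt_zero]
        exact sub_ne_zero.2 (hc.ne_of_abs_lt hr0 (by linarith [hI r hr]))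
      have h2 : (0:ℝ) ^ 2 + r ^ 2 ≠ 0 := by positivity
      have c0 : Continuous fun h : ℝ => normalPt γ t h - γ (t + r) := by
        unfold normalPt; fun_prop
      have c1 : ContinuousAt (fun h => D h r) 0 :=
        (Complex.continuous_im.continuousAt.comp
          (continuousAt_const.div c0.continuousAt hne)).sub
          (ContinuousAt.div (by fun_prop) (by fun_prop) h2)
      exact c1.tendsto.mono_left nhdsWithin_le_nhds
  have hp : Function.Periodic (fun _ : ℝ => (1:ℝ)) L := fun _ => rfl
  have h0 : ∫ r in (-(L/2))..(L/2), D 0 r = dl γ L (fun _ => 1) (γ t) := by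
    rw [hc.dl_window hp _ t]
    simp [hD, normalPt_zero]
  rw [h0] at hlim
  refine hlim.congr' ?_
  filter_upwards [hsmall, self_mem_nhdsWithin] with h hh hne
  have hne : h ≠ 0 := hne
  have iD : IntervalIntegrable (D h) volume (-(L/2)) (L/2) := by
    refine (intervalIntegrable_const (c := C)).mono_fun (hDm h).aestronglyMeasurable ?_
    refine (ae_restrict_iff' measurableSet_uIoc).2 (Eventually.of_forall fun r hr => ?_)
    exact (hDb h r hh (hI r hr)).trans (le_abs_self C)
  have iP : IntervalIntegrable (fun r : ℝ => h / (h ^ 2 + r ^ 2)) volume (-(L/2)) (L/2) :=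
    (continuous_poisson hne).intervalIntegrable _ _
  have := intervalIntegral.integral_add iD iP
  rw [poisson_integral hne] at this
  rw [hc.dl_window hp _ t, eq_sub_iff_add_eq, ← this]
  simp [hD]

/-- Along the normal line, the potential of the constant density tends to its direct value at the
boundary point plus `π` on the side of the normal, minus `π` on the other side. -/
lemma dl_one_jump (hc : ClosedCurve γ L) {C h₀ : ℝ} (hh₀ : 0 < h₀)
    (hC : ∀ s h r : ℝ, |h| ≤ h₀ → |r| ≤ L / 2 → (h ≠ 0 → normalPt γ s h ≠ γ (s + r)) ∧
      ‖deriv γ (s + r) / (normalPt γ s h - γ (s + r)) - 1 / (-Complex.I * h - r : ℂ)‖ ≤ C)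
    (t : ℝ) :
    Tendsto (fun h => dl γ L (fun _ => 1) (normalPt γ t h)) (𝓝[>] 0)
      (𝓝 (dl γ L (fun _ => 1) (γ t) + π)) ∧
    Tendsto (fun h => dl γ L (fun _ => 1) (normalPt γ t h)) (𝓝[<] 0)
      (𝓝 (dl γ L (fun _ => 1) (γ t) - π)) := by
  have h := hc.dl_one_split hh₀ hC t
  have hL2 : 0 < L / 2 := half_pos hc.pos
  have hgt : Ioi (0:ℝ) ⊆ {0}ᶜ := fun x hx => ne_of_gt hx
  have hlt : Iio (0:ℝ) ⊆ {0}ᶜ := fun x hx => ne_of_lt hx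
  have a1 : Tendsto (fun h : ℝ => 2 * arctan (L / 2 / h)) (𝓝[>] 0) (𝓝 (2 * (π / 2))) := by
    have := tendsto_inv_nhdsGT_zero.const_mul_atTop hL2
    exact ((tendsto_arctan_atTop.mono_right nhdsWithin_le_nhds).comp this).const_mul 2
  have a2 : Tendsto (fun h : ℝ => 2 * arctan (L / 2 / h)) (𝓝[<] 0) (𝓝 (2 * -(π / 2))) := by
    have := tendsto_inv_nhdsLT_zero.const_mul_atBot hL2
    exact ((tendsto_arctan_atBot.mono_right nhdsWithin_le_nhds).comp this).const_mul 2
  constructor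
  · have := (h.mono_left (nhdsWithin_mono 0 hgt)).add a1
    simp only [sub_add_cancel] at this
    convert this using 2
    ring
  · have := (h.mono_left (nhdsWithin_mono 0 hlt)).add a2
    simp only [sub_add_cancel] at this
    convert this using 2
    ring

/-! ### Inside, outside, and Gauss's lemma -/

lemma normalPt_notMem (hc : ClosedCurve γ L) {h₀ : ℝ}
    (hC : ∀ s h r : ℝ, |h| ≤ h₀ → |r| ≤ L / 2 → (h ≠ 0 → normalPt γ s h ≠ γ (s + r)))
    {s h : ℝ} (hh : |h| ≤ h₀) (h0 : h ≠ 0) : normalPt γ s h ∉ range γ := by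
  rintro ⟨σ, hσ⟩
  have h1 := toIcoMod_mem_Ico hc.pos (s - L / 2) σ
  set τ := toIcoMod hc.pos (s - L / 2) σ with hτ
  have h2 : γ τ = γ σ := by
    rw [hτ, ← self_sub_toIcoDiv_zsmul]
    exact hc.per.sub_zsmul_eq _
  refine hC s h (τ - s) hh (abs_le.2 ⟨by linarith [h1.1], by linarith [h1.2]⟩) h0 ?_
  rw [add_sub_cancel, h2, hσ]

/-- A preconnected set avoiding the frontier of an open set lies inside it or away from it. -/
lemma _root_.IsPreconnected.subset_or_subset_of_frontier {S Ω : Set ℂ} (hS : IsPreconnected S)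
    (hΩ : IsOpen Ω) (hd : S ⊆ (frontier Ω)ᶜ) : S ⊆ Ω ∨ S ⊆ (closure Ω)ᶜ := by
  refine isPreconnected_iff_subset_of_disjoint.1 hS Ω (closure Ω)ᶜ hΩ
    isClosed_closure.isOpen_compl (fun x hx => ?_) ?_
  · have := hd hx
    rw [hΩ.frontier_eq] at this
    by_cases h : x ∈ Ω
    · exact Or.inl h
    · exact Or.inr fun h' => this ⟨h', h⟩
  · ext x
    simp only [mem_inter_iff, mem_compl_iff, mem_empty_iff_false, iff_false]
    exact fun h => h.2.2 (subset_closure h.2.1)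

lemma preconnected_collar (hc : ClosedCurve γ L) (a b : ℝ) :
    IsPreconnected ((fun p : ℝ × ℝ => normalPt γ p.1 p.2) '' (univ ×ˢ Ioo a b)) := by
  have hcγ := hc.cont
  have hcd := hc.cont_deriv
  refine (convex_univ.prod (convex_Ioo a b)).isPreconnected.image _ (Continuous.continuousOn ?_)
  unfold normalPt
  fun_prop

/-- The winding integral vanishes on the outer collar of the curve, and near the curve all
points of `Ω` lie in the inner collar. -/
lemma outer_collar (hc : ClosedCurve γ L) {h₀ : ℝ} (hh₀ : 0 < h₀)
    (hcol : ∀ s h : ℝ, |h| ≤ h₀ → h ≠ 0 → normalPt γ s h ∉ range γ)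
    {Ω : Set ℂ} (hΩ : IsOpen Ω) (hbdd : Bornology.IsBounded Ω) (hfr : frontier Ω = range γ)
    (hout : ∀ᶠ h in 𝓝[>] (0:ℝ), normalPt γ 0 h ∉ closure Ω) :
    (∀ s, ∀ h ∈ Ioo 0 h₀, cauchyInt γ L (deriv γ) (normalPt γ s h) = 0) ∧
    ∀ x ∈ Ω, (∃ σ, ‖x - γ σ‖ < h₀) → ∃ s, ∃ h ∈ Ioo (-h₀) 0, x = normalPt γ s h := by
  set Φ : ℝ × ℝ → ℂ := fun p => normalPt γ p.1 p.2 with hΦ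
  set P : Set ℂ := Φ '' (univ ×ˢ Ioo 0 h₀) with hP
  set N : Set ℂ := Φ '' (univ ×ˢ Ioo (-h₀) 0) with hN
  have memP : ∀ s, ∀ h ∈ Ioo 0 h₀, normalPt γ s h ∈ P := fun s h hh =>
    ⟨(s, h), ⟨mem_univ _, hh⟩, rfl⟩
  have memN : ∀ s, ∀ h ∈ Ioo (-h₀) 0, normalPt γ s h ∈ N := fun s h hh =>
    ⟨(s, h), ⟨mem_univ _, hh⟩, rfl⟩
  have hPΓ : P ⊆ (range γ)ᶜ := by
    rintro _ ⟨⟨s, h⟩, ⟨-, h1, h2⟩, rfl⟩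
    dsimp only at h1 h2
    exact hcol s h (by rw [abs_of_pos h1]; exact h2.le) h1.ne'
  have hNΓ : N ⊆ (range γ)ᶜ := by
    rintro _ ⟨⟨s, h⟩, ⟨-, h1, h2⟩, rfl⟩
    dsimp only at h1 h2
    exact hcol s h (by rw [abs_of_neg h2]; linarith) h2.ne
  have hPpre : IsPreconnected P := hc.preconnected_collar _ _
  have hNpre : IsPreconnected N := hc.preconnected_collar _ _
  obtain ⟨h1, hh1, hh1'⟩ : ∃ h, h ∈ Ioo 0 h₀ ∧ normalPt γ 0 h ∉ closure Ω :=
    ((show ∀ᶠ h in 𝓝[>] (0:ℝ), h ∈ Ioo 0 h₀ from Ioo_mem_nhdsGT hh₀).and hout).exists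
  have hPout : P ⊆ (closure Ω)ᶜ := by
    rcases hPpre.subset_or_subset_of_frontier hΩ (by rwa [hfr]) with h | h
    · exact absurd (subset_closure (h (memP 0 h1 hh1))) hh1'
    · exact h
  have hΓΩ : Disjoint (range γ) Ω := by
    rw [← hfr, hΩ.frontier_eq]
    exact disjoint_sdiff_left
  have hcover : ∀ x, (∃ σ, ‖x - γ σ‖ < h₀) → x ∈ range γ ∨ x ∈ P ∨
      ∃ s, ∃ h ∈ Ioo (-h₀) 0, x = normalPt γ s h := by
    rintro x ⟨σ, hσ⟩
    obtain ⟨s, h, rfl, hh⟩ := hc.exists_foot x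
    have := abs_lt.1 ((hh σ).trans_lt hσ)
    rcases lt_trichotomy h 0 with h0 | h0 | h0
    · exact Or.inr (Or.inr ⟨s, h, ⟨this.1, h0⟩, rfl⟩)
    · exact Or.inl ⟨s, by rw [h0, normalPt_zero]⟩
    · exact Or.inr (Or.inl (memP s h ⟨h0, this.2⟩))
  have hin : ∀ x ∈ Ω, (∃ σ, ‖x - γ σ‖ < h₀) → ∃ s, ∃ h ∈ Ioo (-h₀) 0, x = normalPt γ s h := by
    intro x hx hσ
    rcases hcover x hσ with h | h | h
    · exact absurd hx (disjoint_left.1 hΓΩ h)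
    · exact absurd (subset_closure hx) (hPout h)
    · exact h
  have hNin : N ⊆ Ω := by
    have h0 : γ 0 ∈ closure Ω := frontier_subset_closure (hfr ▸ mem_range_self 0)
    obtain ⟨y, hy, hyd⟩ := Metric.mem_closure_iff.1 h0 h₀ hh₀
    rw [dist_comm, dist_eq_norm] at hyd
    obtain ⟨s, h, hh, rfl⟩ := hin y hy ⟨0, hyd⟩
    rcases hNpre.subset_or_subset_of_frontier hΩ (by rwa [hfr]) with h' | h'
    · exact h'
    · exact absurd (subset_closure hy) (h' (memN s h hh))
  refine ⟨?_, hin⟩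
  set F := cauchyInt γ L (deriv γ) with hF
  set c := F (normalPt γ 0 h1) with hcdef
  have hFc : ∀ x ∈ P, F x = c := fun x hx => hc.winding_const hPpre hPΓ hx (memP 0 h1 hh1)
  -- `F` outside `closure Ω`, filled in by `c`, is locally constant on the whole plane
  classical
  set v : ℂ → ℂ := fun x => if x ∈ closure Ω then c else F x with hv
  have hvd : ∀ x, HasDerivAt v 0 x := by
    intro x
    by_cases hx : x ∈ closure Ω
    · have : v =ᶠ[𝓝 x] fun _ => c := by
        by_cases hxΩ : x ∈ Ω
        · filter_upwards [hΩ.mem_nhds hxΩ] with y hy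
          simp [hv, subset_closure hy]
        · have hxf : x ∈ frontier Ω := by rw [hΩ.frontier_eq]; exact ⟨hx, hxΩ⟩
          rw [hfr] at hxf
          obtain ⟨σ, rfl⟩ := hxf
          filter_upwards [Metric.ball_mem_nhds (γ σ) hh₀] with y hy
          rw [Metric.mem_ball, dist_eq_norm] at hy
          rcases hcover y ⟨σ, hy⟩ with h | h | ⟨s, h, hh, rfl⟩
          · have : y ∈ closure Ω := frontier_subset_closure (hfr ▸ h)
            simp [hv, this]
          · have := hPout h
            simp only [mem_compl_iff] at this
            simp [hv, this, hFc y h]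
          · simp [hv, subset_closure (hNin (memN s h hh))]
      exact (hasDerivAt_const x c).congr_of_eventuallyEq this
    · have hxΓ : x ∉ range γ := fun h => hx (frontier_subset_closure (hfr ▸ h))
      refine (hc.winding_hasDerivAt hxΓ).congr_of_eventuallyEq ?_
      filter_upwards [isClosed_closure.isOpen_compl.mem_nhds hx] with y hy
      have hy : y ∉ closure Ω := hy
      simp [hv, hF, hy]
  have hvc : ∀ x y, v x = v y := is_const_of_deriv_eq_zero
    (fun x => (hvd x).differentiableAt) fun x => (hvd x).deriv
  have hc0 : c = 0 := by
    rw [← norm_le_zero_iff]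
    refine le_of_forall_pos_le_add fun ε hε => ?_
    obtain ⟨R, hR⟩ := hc.winding_far hε
    obtain ⟨B, hB⟩ := hbdd.closure.exists_norm_le
    set x : ℂ := ((max R (max B 0) + 1 : ℝ) : ℂ) with hx
    have hxn : ‖x‖ = max R (max B 0) + 1 := by
      rw [hx, Complex.norm_real, Real.norm_eq_abs, abs_of_nonneg (by positivity)]
    have hxΩ : x ∉ closure Ω := fun h => by
      have := hB x h
      linarith [le_max_right R (max B 0), le_max_left B 0]
    have e1 : v x = F x := by simp [hv, hxΩ]
    have e2 : v (normalPt γ 0 h1) = c := by simp [hv, hcdef]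
    rw [← e2, hvc _ x, e1, zero_add]
    exact hR x (by linarith [le_max_left R (max B 0)])
  intro s h hh
  rw [hFc _ (memP s h hh), hc0]

/-- Gauss's lemma: the double-layer potential of the constant density on the curve and, near the
curve, in `Ω`. -/
lemma gauss (hc : ClosedCurve γ L) {C h₀ : ℝ} (hh₀ : 0 < h₀)
    (hC : ∀ s h r : ℝ, |h| ≤ h₀ → |r| ≤ L / 2 → (h ≠ 0 → normalPt γ s h ≠ γ (s + r)) ∧
      ‖deriv γ (s + r) / (normalPt γ s h - γ (s + r)) - 1 / (-Complex.I * h - r : ℂ)‖ ≤ C)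
    {Ω : Set ℂ} (hΩ : IsOpen Ω) (hbdd : Bornology.IsBounded Ω) (hfr : frontier Ω = range γ)
    (hout : ∀ᶠ h in 𝓝[>] (0:ℝ), normalPt γ 0 h ∉ closure Ω) :
    (∀ t, dl γ L (fun _ => 1) (γ t) = -π) ∧
    ∀ x ∈ Ω, (∃ σ, ‖x - γ σ‖ < h₀) → dl γ L (fun _ => 1) x = -2 * π := by
  have hcol : ∀ s h : ℝ, |h| ≤ h₀ → h ≠ 0 → normalPt γ s h ∉ range γ := fun s h hh h0 =>
    hc.normalPt_notMem (fun s h r h1 h2 => (hC s h r h1 h2).1) hh h0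
  obtain ⟨hP, hin⟩ := hc.outer_collar hh₀ hcol hΩ hbdd hfr hout
  have hgauss : ∀ t, dl γ L (fun _ => 1) (γ t) = -π := by
    intro t
    have h1 := (hc.dl_one_jump hh₀ hC t).1
    have h2 : Tendsto (fun h => dl γ L (fun _ => 1) (normalPt γ t h)) (𝓝[>] 0) (𝓝 0) := by
      refine tendsto_const_nhds.congr' ?_
      filter_upwards [Ioo_mem_nhdsGT hh₀] with h hh
      rw [hc.dl_one (hcol t h (by rw [abs_of_pos hh.1]; exact hh.2.le) hh.1.ne'), hP t h hh]
      simp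
    linarith [tendsto_nhds_unique h1 h2]
  refine ⟨hgauss, fun x hx hσ => ?_⟩
  obtain ⟨s, h, hh, rfl⟩ := hin x hx hσ
  have hneg : ∀ h ∈ Ioo (-h₀) 0, normalPt γ s h ∉ range γ := fun h hh =>
    hcol s h (by rw [abs_of_neg hh.2]; linarith [hh.1]) hh.2.ne
  have h1 := (hc.dl_one_jump hh₀ hC s).2
  have h2 : Tendsto (fun h' => dl γ L (fun _ => 1) (normalPt γ s h')) (𝓝[<] 0)
      (𝓝 (dl γ L (fun _ => 1) (normalPt γ s h))) := by
    refine tendsto_const_nhds.congr' ?_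
    filter_upwards [Ioo_mem_nhdsLT (neg_lt_zero.2 hh₀)] with h' hh'
    rw [hc.dl_one (hneg h hh), hc.dl_one (hneg h' hh')]
    congr 1
    refine hc.winding_const (hc.preconnected_collar (-h₀) 0) ?_
      ⟨(s, h), ⟨mem_univ _, hh⟩, rfl⟩ ⟨(s, h'), ⟨mem_univ _, hh'⟩, rfl⟩
    rintro _ ⟨⟨s, h⟩, ⟨-, h1, h2⟩, rfl⟩
    dsimp only at h1 h2
    exact hcol s h (by rw [abs_of_neg h2]; linarith) h2.ne
  have := tendsto_nhds_unique h1 h2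
  rw [hgauss s] at this
  linarith

/-! ### Continuity where the density vanishes -/

lemma ae_ne (hc : ClosedCurve γ L) (t : ℝ) : ∀ᵐ σ : ℝ, γ t ≠ γ σ := by
  have hsub : {σ : ℝ | γ t = γ σ} ⊆ range fun m : ℤ => t + m * L := by
    intro σ hσ
    obtain ⟨m, hm⟩ := hc.exists_int (Eq.symm hσ)
    exact ⟨m, hm.symm⟩
  have h0 : volume {σ : ℝ | γ t = γ σ} = 0 := ((countable_range _).mono hsub).measure_zero _
  simpa [ae_iff] using h0

lemma kernel_integrable (hc : ClosedCurve γ L) {ν : ℝ → ℝ} (hν : Continuous ν) (x : ℂ) :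
    IntervalIntegrable (fun σ => (deriv γ σ / (x - γ σ)).im * ν σ) volume 0 L := by
  by_cases hx : x ∈ range γ
  · obtain ⟨t, rfl⟩ := hx
    have h1 : Continuous fun σ => dlKernel γ t σ * ν σ :=
      (hc.dlKernel_cont.comp (f := fun σ : ℝ => (t, σ)) (by fun_prop)).mul hν
    refine (h1.intervalIntegrable 0 L).congr_ae (ae_restrict_of_ae ?_)
    filter_upwards [hc.ae_ne t] with σ hσ
    rw [dlKernel, if_neg hσ]
  · exact ((hc.continuous_kernel hx).mul hν).intervalIntegrable _ _

lemma dl_add (hc : ClosedCurve γ L) {ν₁ ν₂ : ℝ → ℝ} (h₁ : Continuous ν₁) (h₂ : Continuous ν₂)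
    (x : ℂ) : dl γ L (fun σ => ν₁ σ + ν₂ σ) x = dl γ L ν₁ x + dl γ L ν₂ x := by
  rw [dl, dl, dl, ← intervalIntegral.integral_add (hc.kernel_integrable h₁ x)
    (hc.kernel_integrable h₂ x)]
  simp only [mul_add]

/-- If the density vanishes wherever `|ν| < ε` and `ν` vanishes over the point `γ t`, the
double-layer potential is continuous at `γ t`: the density is supported away from that point. -/
lemma dl_tendsto_of_support (hc : ClosedCurve γ L) {ν ν₁ : ℝ → ℝ} (hν : Continuous ν)
    (hp : Function.Periodic ν L) (h₁ : Continuous ν₁) {ε : ℝ} (hε : 0 < ε)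
    (hsupp : ∀ σ, |ν σ| < ε → ν₁ σ = 0) {t : ℝ} (ht : ν t = 0) :
    Tendsto (dl γ L ν₁) (𝓝 (γ t)) (𝓝 (dl γ L ν₁ (γ t))) := by
  have hcγ := hc.cont
  have hL := hc.pos
  have hne : ∀ σ, ε ≤ |ν σ| → γ t ≠ γ σ := fun σ hσ h => by
    obtain ⟨m, hm⟩ := hc.exists_int h
    have h2 := (hp.int_mul m) σ
    rw [← hm, ht] at h2
    rw [← h2, abs_zero] at hσ
    linarith
  have hK : IsCompact (Icc 0 L ∩ {σ | ε ≤ |ν σ|}) :=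
    isCompact_Icc.inter_right (isClosed_le continuous_const hν.abs)
  obtain ⟨m, hm, hmle⟩ := hK.exists_forall_le' (f := fun σ => ‖γ t - γ σ‖)
    (Continuous.continuousOn (by fun_prop)) (a := 0)
    (fun σ hσ => norm_pos_iff.2 (sub_ne_zero.2 (hne σ hσ.2)))
  refine intervalIntegral.tendsto_integral_filter_of_dominated_convergence
    (fun σ => 2 / m * ‖ν₁ σ‖)
    (Eventually.of_forall fun x => ((hc.measurable_kernel x).mul h₁.measurable).aestronglyMeasurable)
    ?_ ((continuous_const.mul h₁.norm).intervalIntegrable _ _) ?_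
  · filter_upwards [Metric.ball_mem_nhds (γ t) (half_pos hm)] with x hx
    rw [Metric.mem_ball, dist_comm, dist_eq_norm] at hx
    refine Eventually.of_forall fun σ hσ => ?_
    rw [uIoc_of_le hL.le] at hσ
    rcases lt_or_ge (|ν σ|) ε with h | h
    · simp [hsupp σ h]
    · have h2 := hmle σ ⟨⟨hσ.1.le, hσ.2⟩, h⟩
      have h3 := norm_sub_le_norm_sub_add_norm_sub (γ t) x (γ σ)
      have h4 : m / 2 ≤ ‖x - γ σ‖ := by linarith
      rw [norm_mul]
      refine mul_le_mul_of_nonneg_right ?_ (norm_nonneg _)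
      refine (Complex.abs_im_le_norm _).trans ?_
      rw [norm_div, hc.unit]
      exact (one_div_le_one_div_of_le (by positivity) h4).trans_eq (by field_simp)
  · refine Eventually.of_forall fun σ _ => ?_
    rcases lt_or_ge (|ν σ|) ε with h | h
    · simp [hsupp σ h]
    · have c0 : ContinuousAt (fun x : ℂ => deriv γ σ / (x - γ σ)) (γ t) :=
        ContinuousAt.div (by fun_prop) (by fun_prop) (sub_ne_zero.2 (hne σ h))
      have c1 : ContinuousAt (fun x : ℂ => (deriv γ σ / (x - γ σ)).im) (γ t) :=
        Complex.continuous_im.continuousAt.comp c0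
      exact (c1.mul continuousAt_const).tendsto

/-- The double-layer potential is continuous at the boundary points where the density vanishes. -/
lemma dl_tendsto (hc : ClosedCurve γ L) {C h₀ : ℝ} (hC0 : 0 < C) (hh₀ : 0 < h₀)
    (hC : ∀ s h r : ℝ, |h| ≤ h₀ → |r| ≤ L / 2 →
      ‖deriv γ (s + r) / (normalPt γ s h - γ (s + r)) - 1 / (-Complex.I * h - r : ℂ)‖ ≤ C)
    {ν : ℝ → ℝ} (hν : Continuous ν) (hp : Function.Periodic ν L) {t : ℝ} (ht : ν t = 0) :
    Tendsto (dl γ L ν) (𝓝 (γ t)) (𝓝 (dl γ L ν (γ t))) := by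
  have hL := hc.pos
  rw [Metric.tendsto_nhds]
  intro ε hε
  set M := C * L + π with hM
  have hMpos : 0 < M := by positivity
  set δ := ε / (4 * M) with hδdef
  have hδ : 0 < δ := by positivity
  -- `ν₂` is `ν` truncated at height `δ`; the remainder `ν₁` vanishes where `|ν| < δ`
  set ν₂ : ℝ → ℝ := fun σ => max (-δ) (min (ν σ) δ) with hν₂
  set ν₁ : ℝ → ℝ := fun σ => ν σ - ν₂ σ with hν₁
  have c2 : Continuous ν₂ := by fun_prop
  have c1 : Continuous ν₁ := hν.sub c2
  have p2 : Function.Periodic ν₂ L := fun σ => by simp only [hν₂, hp σ]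
  have b2 : ∀ σ, |ν₂ σ| ≤ δ := fun σ =>
    abs_le.2 ⟨le_max_left _ _, max_le (by linarith) (min_le_right _ _)⟩
  have s1 : ∀ σ, |ν σ| < δ → ν₁ σ = 0 := fun σ hσ => by
    have := abs_lt.1 hσ
    simp only [hν₁, hν₂]
    rw [min_eq_left this.2.le, max_eq_right this.1.le, sub_self]
  have hsplit : ∀ x, dl γ L ν x = dl γ L ν₁ x + dl γ L ν₂ x := fun x => by
    rw [← hc.dl_add c1 c2]
    simp [hν₁]
  have hMδ : M * δ = ε / 4 := by rw [hδdef]; field_simp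
  have h1 := Metric.tendsto_nhds.1 (hc.dl_tendsto_of_support hν hp c1 hδ s1 ht) (ε / 2)
    (by positivity)
  have hb0 := hc.dl_bound hC p2 b2 (s := t) (h := 0) (by simpa using hh₀.le)
  rw [normalPt_zero, hMδ] at hb0
  filter_upwards [h1, Metric.ball_mem_nhds (γ t) hh₀] with x hx hxb
  rw [Metric.mem_ball, dist_eq_norm] at hxb
  obtain ⟨s, h, rfl, hh⟩ := hc.exists_foot x
  have hb := hc.dl_bound hC p2 b2 (s := s) (h := h) ((hh t).trans hxb.le)
  rw [hMδ] at hb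
  rw [Real.dist_eq] at hx ⊢
  rw [hsplit, hsplit]
  rw [abs_lt] at hx ⊢
  rw [abs_le] at hb hb0
  constructor <;> linarith [hx.1, hx.2, hb.1, hb.2, hb0.1, hb0.2]

end ClosedCurve

/-! ### The Dirichlet problem -/

/-- The double-layer kernel of a closed smooth regular curve extends
continuously to the diagonal; and if a continuous periodic density `μ` solves the
second-kind boundary integral equation `-μ/2 + D[μ]∘γ = g`, then the double-layer potential
`w` is harmonic in the enclosed domain `Ω` and attains the Dirichlet data `g` on the
boundary. -/
theorem doubleLayer_solves_dirichlet_problem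
    (γ : ℝ → ℂ) (L : ℝ) (hL : 0 < L)
    (hγsmooth : ContDiff ℝ (⊤ : ℕ∞) γ) (hγper : Function.Periodic γ L)
    (hγinj : Set.InjOn γ (Set.Ico 0 L)) (hγunit : ∀ t : ℝ, ‖deriv γ t‖ = 1)
    (n : ℝ → ℂ) (hn : ∀ t : ℝ, n t = -Complex.I * deriv γ t)
    (Ω : Set ℂ) (hΩopen : IsOpen Ω) (hΩbdd : Bornology.IsBounded Ω)
    (hfront : frontier Ω = Set.range γ)
    (hout : ∀ t : ℝ, ∀ᶠ h in 𝓝[>] (0:ℝ), γ t + h • n t ∉ closure Ω)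
    (g μ : ℝ → ℝ) (hgc : Continuous g) (hgper : Function.Periodic g L)
    (hμc : Continuous μ) (hμper : Function.Periodic μ L)
    (w : ℂ → ℝ)
    (hw : ∀ x : ℂ, w x = (1 / (2 * π)) *
      ∫ s in (0:ℝ)..L, (dot2 (n s) (x - γ s) / ‖x - γ s‖ ^ 2) * μ s) :
    (∃ k : ℝ → ℝ → ℝ, Continuous (fun p : ℝ × ℝ => k p.1 p.2) ∧
        ∀ t s : ℝ, γ t ≠ γ s →
          k t s = (1 / (2 * π)) * (dot2 (n s) (γ t - γ s) / ‖γ t - γ s‖ ^ 2)) ∧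
    ∀ k : ℝ → ℝ → ℝ, Continuous (fun p : ℝ × ℝ => k p.1 p.2) →
      (∀ t s : ℝ, γ t ≠ γ s →
        k t s = (1 / (2 * π)) * (dot2 (n s) (γ t - γ s) / ‖γ t - γ s‖ ^ 2)) →
      (∀ t : ℝ, -μ t / 2 + ∫ s in (0:ℝ)..L, k t s * μ s = g t) →
      (ContDiffOn ℝ 2 w Ω ∧ (∀ x ∈ Ω, lap w x = 0) ∧
        ∀ t : ℝ, Filter.Tendsto w (𝓝[Ω] (γ t)) (𝓝 (g t))) := by
  have hc : ClosedCurve γ L := ⟨hL, hγsmooth, hγper, hγinj, hγunit⟩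
  have hkern : ∀ x s, dot2 (n s) (x - γ s) / ‖x - γ s‖ ^ 2 = (deriv γ s / (x - γ s)).im :=
    fun x s => by rw [hn, dot2_normal]
  have hwdl : ∀ x, w x = 1 / (2 * π) * dl γ L μ x := fun x => by
    rw [hw, dl]
    simp only [hkern]
  simp only [hkern]
  refine ⟨⟨fun t s => 1 / (2 * π) * dlKernel γ t s, continuous_const.mul hc.dlKernel_cont,
    fun t s hts => by simp only [dlKernel, if_neg hts]⟩, fun k _ hk hbie => ?_⟩
  obtain ⟨C, h₀, hC0, hh₀, hC⟩ := hc.kernel_compare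
  have hC2 := fun s h r h1 h2 => (hC s h r h1 h2).2
  have hΩΓ : Ω ⊆ (range γ)ᶜ := fun x hx h => by
    rw [← hfront, hΩopen.frontier_eq] at h
    exact h.2 hx
  have hρ : Continuous fun σ => deriv γ σ * (μ σ : ℂ) :=
    hc.cont_deriv.mul (Complex.continuous_ofReal.comp hμc)
  have hharm := harmonic_im hΩopen ((hc.cauchyInt_differentiableOn hρ).mono hΩΓ) (w := w)
    (c := 1 / (2 * π)) fun x hx => by rw [hwdl, hc.im_cauchyInt hμc (hΩΓ hx)]
  refine ⟨hharm.1, hharm.2, fun t => ?_⟩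
  have hout0 : ∀ᶠ h in 𝓝[>] (0:ℝ), normalPt γ 0 h ∉ closure Ω := by
    filter_upwards [hout 0] with h hh
    rwa [hn, Complex.real_smul] at hh
  obtain ⟨hΓ, hin⟩ := hc.gauss hh₀ hC hΩopen hΩbdd hfront hout0
  have hkint : ∫ s in (0:ℝ)..L, k t s * μ s = 1 / (2 * π) * dl γ L μ (γ t) := by
    rw [dl, ← intervalIntegral.integral_const_mul]
    refine intervalIntegral.integral_congr_ae ?_
    filter_upwards [hc.ae_ne t] with s hs _
    rw [hk t s hs]
    ring
  -- subtracting the value at `t` makes the density vanish at `γ t`; the constant density is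
  -- given by Gauss's lemma
  set ν : ℝ → ℝ := fun σ => μ σ - μ t with hν
  have hνc : Continuous ν := hμc.sub continuous_const
  have hsplit : ∀ x, dl γ L μ x = dl γ L ν x + μ t * dl γ L (fun _ => 1) x := fun x => by
    have h1 : μ t * dl γ L (fun _ => 1) x = dl γ L (fun _ => μ t) x := by
      rw [dl, dl, ← intervalIntegral.integral_const_mul]
      congr 1
      funext σ
      ring
    rw [h1, ← hc.dl_add hνc continuous_const]
    simp [hν]
  have hlim := hc.dl_tendsto hC0 hh₀ hC2 hνc (fun σ => by simp only [hν, hμper σ]) (t := t)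
    (by simp [hν])
  have hlim2 : Tendsto (fun x => 1 / (2 * π) * (dl γ L ν x + μ t * (-2 * π))) (𝓝[Ω] (γ t))
      (𝓝 (1 / (2 * π) * (dl γ L ν (γ t) + μ t * (-2 * π)))) :=
    ((hlim.mono_left nhdsWithin_le_nhds).add_const _).const_mul _
  have hval : 1 / (2 * π) * (dl γ L ν (γ t) + μ t * (-2 * π)) = g t := by
    rw [← hbie t, hkint, hsplit, hΓ t]
    field_simp
    ring
  rw [hval] at hlim2
  refine hlim2.congr' ?_
  filter_upwards [self_mem_nhdsWithin,
    nhdsWithin_le_nhds (Metric.ball_mem_nhds (γ t) hh₀)] with x hx hxb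
  rw [Metric.mem_ball, dist_eq_norm] at hxb
  rw [hwdl, hsplit, hin x hx ⟨t, hxb⟩]
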